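/- T(I) is an absolute retract: for every metric space Z and every closed topological embedding e : T(I) → Z (i.e., e is a homeomorphism onto its image and e(T(I)) is closed in Z), there exists a continuous map r : Z → T(I) with r ∘ e = id on T(I). -/

import Mathlib

/-!
The set `T = TransSet` is far from convex, but it has the following approximation property. If a
map `h : I → I` is `t`-close to a transitive map `f`, replace `h` by a `t`-close `L`-Lipschitz
function `g`, add a triangle wave of amplitude `3t` and very high frequency `N`, and fold the result
back into `[0, 1]`. The resulting map `F` is within `4t` of `h`, and it is transitive: it is so
expanding that each interval eventually covers an interval as long as a period of the wave
(`IsWiggle.exists_long`), and `F` maps an interval `J` of that length onto a set that contains,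
for each `y ∈ J`, an interval through `f y` again as long as a period (`IsWiggle.exists_cover`).
Hence the `F`-images of an interval follow all the `f`-orbits that start in it
(`IsWiggle.isTransitiveMap`).

Given a closed embedding `e : T → Z`, the inverse of `e` extends to a continuous
`E : Z → C(I, I)`: uncurry and apply Tietze's theorem on `Z × I` (`exists_extension_curry`). Let
`τ z = dist (E z, T) + dist (z, e T)`. Off `e T` one has `τ z > dist (E z, T)`, so the construction
above, applied to `h = E z` and `t = τ z`, gives a transitive map; the pair `(g, L)` can be chosen
continuously in `z` by a partition of unity, as the admissible pairs form a convex set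
(`exists_parametric_lipschitz`). Since `τ` vanishes on `e T`, the maps so obtained fit together
continuously with the inverse of `e`, and form the required retraction.
-/

open unitInterval Topology

/-- A continuous self-map of the unit interval is (topologically) transitive if for every pair
of nonempty open sets `U, V ⊆ I` there is a positive integer `n` with `U ∩ f⁻ⁿ(V) ≠ ∅`. -/
def IsTransitiveMap (f : C(I, I)) : Prop :=
  ∀ U V : Set I, IsOpen U → IsOpen V → U.Nonempty → V.Nonempty →
    ∃ n : ℕ, 0 < n ∧ (U ∩ (f : I → I)^[n] ⁻¹' V).Nonempty

/-- `T(I)`: the set of transitive maps in `C(I, I)`. -/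
def TransSet : Set C(I, I) := {f | IsTransitiveMap f}

/-! ### The triangle wave -/

/-- The triangle wave of period `2`, that is, the distance to the nearest even integer. It folds
the real line onto `[0, 1]`, and it also serves as the oscillating perturbation. -/
noncomputable def tri (y : ℝ) : ℝ := ‖(y : AddCircle (2 : ℝ))‖

lemma abs_tri_sub_le (x y : ℝ) : |tri x - tri y| ≤ |x - y| := by
  unfold tri
  refine (abs_norm_sub_norm_le _ _).trans ?_
  rw [← AddCircle.coe_sub, AddCircle.norm_eq]
  have := round_le ((2 : ℝ)⁻¹ * (x - y)) 0
  have h2 : |x - y - round ((2 : ℝ)⁻¹ * (x - y)) * 2|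
      = 2 * |(2 : ℝ)⁻¹ * (x - y) - round ((2 : ℝ)⁻¹ * (x - y))| := by
    rw [← abs_two, ← abs_mul, abs_two]; congr 1; ring
  have h3 : |x - y| = 2 * |(2 : ℝ)⁻¹ * (x - y) - (0 : ℤ)| := by
    rw [← abs_two, ← abs_mul, abs_two]; congr 1; push_cast; ring
  rw [h2, h3]; linarith

lemma continuous_tri : Continuous tri :=
  continuous_norm.comp (AddCircle.continuous_mk' (2 : ℝ))

lemma tri_mem (y : ℝ) : tri y ∈ I :=
  ⟨norm_nonneg _, (AddCircle.norm_le_half_period 2 two_ne_zero).trans (by norm_num)⟩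

lemma tri_eq_abs (y : ℝ) (k : ℤ) (h : |y - 2 * k| ≤ 1) : tri y = |y - 2 * k| := by
  have h1 : (y : AddCircle (2 : ℝ)) = ((y - 2 * k : ℝ) : AddCircle (2 : ℝ)) := by
    rw [eq_comm, ← sub_eq_zero, ← AddCircle.coe_sub, AddCircle.coe_eq_zero_iff]
    exact ⟨-k, by rw [zsmul_eq_mul]; push_cast; ring⟩
  unfold tri
  rw [h1, (AddCircle.norm_coe_eq_abs_iff 2 two_ne_zero).2 (by simpa using h)]

lemma tri_of_mem {y : ℝ} (h : y ∈ I) : tri y = y := by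
  have := tri_eq_abs y 0 (by simpa [abs_of_nonneg h.1] using h.2)
  simpa [abs_of_nonneg h.1] using this

/-- The triangle wave is an isometry between consecutive integers. -/
lemma abs_tri_sub_eq (m : ℤ) {x y : ℝ} (hx : (m : ℝ) ≤ x) (hxy : x ≤ y) (hy : y ≤ m + 1) :
    |tri y - tri x| = y - x := by
  obtain ⟨k, rfl | rfl⟩ := Int.even_or_odd' m
  · push_cast at *
    have hx' : |x - 2 * k| = x - 2 * k := abs_of_nonneg (by linarith)
    have hy' : |y - 2 * k| = y - 2 * k := abs_of_nonneg (by linarith)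
    rw [tri_eq_abs x k (by linarith), tri_eq_abs y k (by linarith), hx', hy',
      abs_of_nonneg (by linarith)]
    ring
  · push_cast at *
    have hx' : |x - 2 * (k + 1 : ℤ)| = -(x - 2 * (k + 1 : ℤ)) :=
      abs_of_nonpos (by push_cast; linarith)
    have hy' : |y - 2 * (k + 1 : ℤ)| = -(y - 2 * (k + 1 : ℤ)) :=
      abs_of_nonpos (by push_cast; linarith)
    rw [tri_eq_abs x (k + 1) (by rw [hx']; push_cast; linarith),
      tri_eq_abs y (k + 1) (by rw [hy']; push_cast; linarith), hx', hy',
      abs_of_nonpos (by linarith)]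
    ring

/-- An interval of length at most `1` contains at most one turning point of the triangle wave,
so the wave is an isometry on one of its two halves. -/
lemma exists_tri_isometric {a b : ℝ} (hab : a ≤ b) (h1 : b - a ≤ 1) :
    ∃ a' b', a ≤ a' ∧ a' ≤ b' ∧ b' ≤ b ∧ b' - a' = (b - a) / 2 ∧ |tri b' - tri a'| = b' - a' := by
  have hm := Int.le_ceil a
  have hm' := Int.ceil_lt_add_one a
  rcases le_total ((a + b) / 2) ⌈a⌉ with h | h
  · refine ⟨a, (a + b) / 2, le_rfl, by linarith, by linarith, by ring,
      abs_tri_sub_eq (⌈a⌉ - 1) ?_ ?_ ?_⟩ <;> push_cast <;> linarith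
  · refine ⟨(a + b) / 2, b, by linarith, by linarith, le_rfl, by ring,
      abs_tri_sub_eq ⌈a⌉ ?_ ?_ ?_⟩ <;> linarith

lemma exists_tri_eq_zero {a b : ℝ} (h : 2 ≤ b - a) : ∃ x, a ≤ x ∧ x ≤ b ∧ tri x = 0 := by
  have hm := Int.le_ceil (a / 2)
  have hm' := Int.ceil_lt_add_one (a / 2)
  refine ⟨2 * ⌈a / 2⌉, by linarith, by linarith, ?_⟩
  rw [tri_eq_abs _ ⌈a / 2⌉ (by simp)]; simp

lemma exists_tri_eq_one {a b : ℝ} (h : 2 ≤ b - a) : ∃ x, a ≤ x ∧ x ≤ b ∧ tri x = 1 := by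
  have hm := Int.le_ceil ((a - 1) / 2)
  have hm' := Int.ceil_lt_add_one ((a - 1) / 2)
  refine ⟨2 * ⌈(a - 1) / 2⌉ + 1, by linarith, by linarith, ?_⟩
  rw [tri_eq_abs _ ⌈(a - 1) / 2⌉ (by simp)]; simp

/-! ### Transitivity of folded wiggles -/

/-- The perturbation `g + 3t · w(N ·)` of `g`, where `w = 2 tri - 1` is the triangle wave with
values in `[-1, 1]`; it may leave `[0, 1]`, and is folded back by `tri`. -/
noncomputable def wiggle (g : I → ℝ) (t N : ℝ) (x : I) : ℝ := g x + 3 * t * (2 * tri (N * x) - 1)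

/-- The parameters of a wiggle around `h`: the function `g` is `L`-Lipschitz and `t`-close to `h`,
and the frequency `N` is so large that the wiggle expands on each lap of the wave, that a period
`2 / N` is short in comparison with `t` and `1`, and that `g` varies by at most `t / 2` over a
period. -/
structure IsWiggle (g : I → ℝ) (h : I → I) (t L N : ℝ) : Prop where
  t_pos : 0 < t
  L_nonneg : 0 ≤ L
  N_eq : N = (4 * L + 4) / t + 4
  lip : ∀ x y : I, |g x - g y| ≤ L * |(x : ℝ) - y|
  near : ∀ x, |g x - h x| ≤ t

namespace IsWiggle

variable {g : I → ℝ} {h : I → I} {t L N : ℝ}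

lemma four_le (H : IsWiggle g h t L N) : 4 ≤ N := by
  have := H.t_pos; have := H.L_nonneg
  rw [H.N_eq]
  have : 0 ≤ (4 * L + 4) / t := by positivity
  linarith

lemma mul_eq (H : IsWiggle g h t L N) : t * N = 4 * L + 4 + 4 * t := by
  have := H.t_pos.ne'
  rw [H.N_eq]; field_simp

/-- On intervals shorter than a period the wiggle followed by folding doubles lengths. -/
lemma exists_expand (H : IsWiggle g h t L N) {a b : I} (hab : a ≤ b) (hN : (b : ℝ) - a ≤ 2 / N)
    {F : C(I, I)} (hF : ∀ x, (F x : ℝ) = tri (wiggle g t N x)) (hc : Continuous g) :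
    ∃ c ∈ Set.Icc a b, ∃ d ∈ Set.Icc a b, min (1 / 2) (2 * ((b : ℝ) - a)) ≤ (F d : ℝ) - F c := by
  have ht := H.t_pos
  have hL := H.L_nonneg
  have h4 := H.four_le
  have hm := H.mul_eq
  have hab' : (a : ℝ) ≤ b := hab
  have hu : Continuous (wiggle g t N) := by
    unfold wiggle
    have := continuous_tri
    fun_prop
  -- half of `[a, b]` has at most one turning point, and so a quarter of it has none
  obtain ⟨p, q, hp, hpq, hq, hlen, htri⟩ :=
    exists_tri_isometric (a := N * a) (b := N * (a + ((b : ℝ) - a) / 2)) (by nlinarith) (by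
      rw [le_div_iff₀ (by linarith)] at hN
      nlinarith)
  have hNpos : 0 < N := by linarith
  have hpa : (a : ℝ) ≤ p / N := by rw [le_div_iff₀ hNpos]; linarith
  have hqb : q / N ≤ b := by rw [div_le_iff₀ hNpos]; nlinarith
  have hpq' : p / N ≤ q / N := by gcongr
  let P : I := ⟨p / N, a.2.1.trans hpa, (hpq'.trans hqb).trans b.2.2⟩
  let Q : I := ⟨q / N, a.2.1.trans (hpa.trans hpq'), hqb.trans b.2.2⟩
  have hNP : N * (P : ℝ) = p := by simp only [P]; field_simp
  have hNQ : N * (Q : ℝ) = q := by simp only [Q]; field_simp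
  have hQP : N * ((Q : ℝ) - P) = N * (((b : ℝ) - a) / 4) := by rw [mul_sub, hNP, hNQ, hlen]; ring
  have hQP' : (Q : ℝ) - P = ((b : ℝ) - a) / 4 := mul_left_cancel₀ hNpos.ne' hQP
  have hg := H.lip Q P
  rw [hQP', abs_of_nonneg (by linarith : 0 ≤ ((b : ℝ) - a) / 4)] at hg
  have key : 4 * ((b : ℝ) - a) ≤ |wiggle g t N Q - wiggle g t N P| := by
    have e : wiggle g t N Q - wiggle g t N P = 6 * t * (tri q - tri p) - (g P - g Q) := by
      unfold wiggle; rw [hNP, hNQ]; ring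
    have h6 : |6 * t * (tri q - tri p)| = 6 * (t * N) * (((b : ℝ) - a) / 4) := by
      rw [abs_mul, htri, abs_of_pos (by linarith), hlen]; ring
    have := abs_sub_abs_le_abs_sub (6 * t * (tri q - tri p)) (g P - g Q)
    rw [abs_sub_comm (g Q)] at hg
    rw [e]
    rw [h6, hm] at this
    nlinarith
  -- all values between those at `P` and `Q` are attained, by the intermediate value theorem
  have hsub : Set.uIcc (wiggle g t N P) (wiggle g t N Q) ⊆ wiggle g t N '' Set.Icc a b := by
    refine (intermediate_value_uIcc hu.continuousOn).trans (Set.image_mono ?_)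
    rw [Set.uIcc_of_le (show P ≤ Q from hpq')]
    exact Set.Icc_subset_Icc hpa hqb
  have key2 : ∀ r s : ℝ, r ≤ s → 4 * ((b : ℝ) - a) ≤ s - r →
      Set.Icc r s ⊆ wiggle g t N '' Set.Icc a b →
      ∃ c ∈ Set.Icc a b, ∃ d ∈ Set.Icc a b,
        min (1 / 2) (2 * ((b : ℝ) - a)) ≤ (F d : ℝ) - F c := by
    intro r s hrs hle hs
    obtain ⟨v, w, hv, hvw, hw, hl, ht⟩ :=
      exists_tri_isometric (a := r) (b := r + min 1 (s - r))
        (by have : 0 ≤ min 1 (s - r) := le_min zero_le_one (by linarith)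
            linarith) (by have := min_le_left 1 (s - r); linarith)
    have hws : w ≤ s := by have := min_le_right 1 (s - r); linarith
    obtain ⟨x, hx, rfl⟩ := hs ⟨hv, hvw.trans hws⟩
    obtain ⟨y, hy, rfl⟩ := hs ⟨hv.trans hvw, hws⟩
    rw [← hF, ← hF, hl] at ht
    have hmin : min (1 / 2) (2 * ((b : ℝ) - a)) ≤ (r + min 1 (s - r) - r) / 2 := by
      rcases min_cases 1 (s - r) with h | h
      · exact (min_le_left _ _).trans (by linarith)
      · exact (min_le_right _ _).trans (by linarith)
    rcases abs_choice ((F y : ℝ) - F x) with h | h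
    · exact ⟨x, hx, y, hy, by linarith⟩
    · exact ⟨y, hy, x, hx, by linarith⟩
  rcases le_total (wiggle g t N P) (wiggle g t N Q) with hle | hle
  · rw [Set.uIcc_of_le hle] at hsub
    rw [abs_of_nonneg (by linarith)] at key
    exact key2 _ _ hle key hsub
  · rw [Set.uIcc_of_ge hle] at hsub
    rw [abs_of_nonpos (by linarith)] at key
    exact key2 _ _ hle (by linarith) hsub

/-- The image of an interval as long as a period contains, for each map `f` that is `t`-close to `h`
and each point `y` of the interval, an interval through `f y` that is again as long as a period. -/
lemma exists_cover (H : IsWiggle g h t L N) {a b : I} (hab : (b : ℝ) - a = 2 / N)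
    {F : C(I, I)} (hF : ∀ x, (F x : ℝ) = tri (wiggle g t N x)) (hc : Continuous g)
    {f : I → I} (hf : ∀ x, |(f x : ℝ) - h x| ≤ t) {y : I} (hy : y ∈ Set.Icc a b) :
    ∃ c d : I, f y ∈ Set.Icc c d ∧ (d : ℝ) - c = 2 / N ∧ Set.Icc c d ⊆ F '' Set.Icc a b := by
  have ht := H.t_pos
  have hL := H.L_nonneg
  have h4 := H.four_le
  have hm := H.mul_eq
  have hNpos : 0 < N := by linarith
  have hu : Continuous (wiggle g t N) := by
    unfold wiggle
    have := continuous_tri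
    fun_prop
  have hθ : 2 / N ≤ 1 / 2 := by rw [div_le_iff₀ hNpos]; linarith
  have hθ0 : 0 < 2 / N := by positivity
  have hθt : (L + 1) * (2 / N) ≤ t / 2 := by
    rw [← mul_div_assoc, div_le_iff₀ hNpos]; nlinarith
  have hlen : N * b - N * a = 2 := by rw [← mul_sub, hab]; field_simp
  have hya : (a : ℝ) ≤ y := hy.1
  have hyb : (y : ℝ) ≤ b := hy.2
  have lift : ∀ x : ℝ, N * a ≤ x → x ≤ N * b → ∃ X ∈ Set.Icc a b, N * (X : ℝ) = x := by
    intro x h1 h2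
    have h1' : (a : ℝ) ≤ x / N := by rw [le_div_iff₀ hNpos]; linarith
    have h2' : x / N ≤ b := by rw [div_le_iff₀ hNpos]; linarith
    exact ⟨⟨x / N, a.2.1.trans h1', h2'.trans b.2.2⟩, ⟨h1', h2'⟩, by simp only; field_simp⟩
  obtain ⟨x₀, h01, h02, hx₀⟩ := exists_tri_eq_zero hlen.ge
  obtain ⟨x₁, h11, h12, hx₁⟩ := exists_tri_eq_one hlen.ge
  obtain ⟨X₀, hX₀, e₀⟩ := lift x₀ h01 h02
  obtain ⟨X₁, hX₁, e₁⟩ := lift x₁ h11 h12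
  have vary : ∀ X ∈ Set.Icc a b, |g X - g y| ≤ L * (2 / N) := by
    intro X hX
    have : |(X : ℝ) - y| ≤ 2 / N := by
      have h1 : (a : ℝ) ≤ X := hX.1
      have h2 : (X : ℝ) ≤ b := hX.2
      rw [abs_le]; constructor <;> linarith
    exact (H.lip X y).trans (by gcongr)
  have hv₀ := abs_le.1 (vary X₀ hX₀)
  have hv₁ := abs_le.1 (vary X₁ hX₁)
  have hn := abs_le.1 (H.near y)
  have hfy := abs_le.1 (hf y)
  have hw₀ : wiggle g t N X₀ ≤ (f y : ℝ) - 2 / N := by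
    unfold wiggle; rw [e₀, hx₀]; linarith
  have hw₁ : (f y : ℝ) + 2 / N ≤ wiggle g t N X₁ := by
    unfold wiggle; rw [e₁, hx₁]; linarith
  have hsub : Set.Icc ((f y : ℝ) - 2 / N) (f y + 2 / N) ⊆ wiggle g t N '' Set.Icc a b := by
    refine (Set.Icc_subset_Icc hw₀ hw₁).trans ?_
    exact (isPreconnected_Icc.image _ hu.continuousOn).Icc_subset ⟨_, hX₀, rfl⟩ ⟨_, hX₁, rfl⟩
  -- the folding map is the identity on `[0, 1]`
  have hsub' : ∀ z : I, (f y : ℝ) - 2 / N ≤ z → (z : ℝ) ≤ f y + 2 / N → z ∈ F '' Set.Icc a b := by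
    intro z h1 h2
    obtain ⟨x, hx, hxz⟩ := hsub ⟨h1, h2⟩
    exact ⟨x, hx, Subtype.ext (by rw [hF, hxz, tri_of_mem z.2])⟩
  have hf0 := (f y).2.1
  have hf1 := (f y).2.2
  rcases le_total ((f y : ℝ) + 2 / N) 1 with hle | hle
  · refine ⟨f y, ⟨(f y : ℝ) + 2 / N, by linarith, hle⟩, ⟨le_rfl, ?_⟩, by simp, ?_⟩
    · exact Subtype.coe_le_coe.1 (by simp only; linarith)
    · rintro z ⟨h1, h2⟩
      have h1' : (f y : ℝ) ≤ z := h1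
      have h2' : (z : ℝ) ≤ f y + 2 / N := h2
      exact hsub' z (by linarith) h2'
  · refine ⟨⟨(f y : ℝ) - 2 / N, by linarith, by linarith⟩, f y, ⟨?_, le_rfl⟩, by simp, ?_⟩
    · exact Subtype.coe_le_coe.1 (by simp only; linarith)
    · rintro z ⟨h1, h2⟩
      have h1' : (f y : ℝ) - 2 / N ≤ z := h1
      have h2' : (z : ℝ) ≤ f y := h2
      exact hsub' z h1' (by linarith)

/-- Repeated doubling makes every interval at least as long as a period. -/
lemma exists_long (H : IsWiggle g h t L N) {F : C(I, I)}
    (hF : ∀ x, (F x : ℝ) = tri (wiggle g t N x)) (hc : Continuous g) {S : Set I}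
    (hS : IsPreconnected S) {a b : I} (ha : a ∈ S) (hb : b ∈ S) (hab : a < b) :
    ∃ n : ℕ, ∃ c d : I, (d : ℝ) - c = 2 / N ∧ Set.Icc c d ⊆ F^[n] '' S := by
  have h4 := H.four_le
  have hNpos : 0 < N := by linarith
  have hθ : 2 / N ≤ 1 / 2 := by rw [div_le_iff₀ hNpos]; linarith
  have hθ0 : 0 < 2 / N := by positivity
  have hab' : (0 : ℝ) < b - a := sub_pos.2 hab
  have hpre : ∀ n, IsPreconnected (F^[n] '' S) := fun n =>
    hS.image _ (F.continuous.iterate n).continuousOn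
  by_contra! hno
  have short : ∀ n, ∀ c ∈ F^[n] '' S, ∀ d ∈ F^[n] '' S, (d : ℝ) - c < 2 / N := by
    intro n c hc' d hd
    by_contra! hlong
    have hd1 := d.2.2
    have hc0 := c.2.1
    refine hno n c ⟨c + 2 / N, by linarith, by linarith⟩ (by simp) ?_
    refine (Set.Icc_subset_Icc_right ?_).trans ((hpre n).Icc_subset hc' hd)
    exact Subtype.coe_le_coe.1 (by simp only; linarith)
  have grow : ∀ n : ℕ, ∃ c ∈ F^[n] '' S, ∃ d ∈ F^[n] '' S, 2 ^ n * ((b : ℝ) - a) ≤ d - c := by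
    intro n
    induction n with
    | zero => exact ⟨a, by simpa using ha, b, by simpa using hb, by simp⟩
    | succ n ih =>
      obtain ⟨c, hc', d, hd, hcd⟩ := ih
      have hpos : 0 < 2 ^ n * ((b : ℝ) - a) := by positivity
      have hle : c ≤ d := Subtype.coe_le_coe.1 (by linarith)
      obtain ⟨p, hp, q, hq, hpq⟩ := H.exists_expand hle (short n c hc' d hd).le hF hc
      have hsub := (hpre n).Icc_subset hc' hd
      have img : ∀ x ∈ Set.Icc c d, F x ∈ F^[n + 1] '' S := by
        intro x hx
        rw [Function.iterate_succ', Set.image_comp]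
        exact ⟨x, hsub hx, rfl⟩
      have hs := short (n + 1) _ (img p hp) _ (img q hq)
      refine ⟨_, img p hp, _, img q hq, ?_⟩
      rcases min_choice (1 / 2 : ℝ) (2 * ((d : ℝ) - c)) with h | h <;> rw [h] at hpq
      · linarith
      · rw [pow_succ]; linarith
  obtain ⟨n, hn⟩ := pow_unbounded_of_one_lt (1 / ((b : ℝ) - a)) one_lt_two
  obtain ⟨c, hc', d, hd, hcd⟩ := grow n
  have hs := short n c hc' d hd
  rw [div_lt_iff₀ hab'] at hn
  linarith

/-- Folded wiggles around `h` with amplitude governed by `t` are transitive as soon as each pair of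
nonempty open sets is joined by an orbit of some self-map of `I` that is `t`-close to `h`: that
orbit is followed by intervals as long as a period. -/
theorem isTransitiveMap (H : IsWiggle g h t L N) {F : C(I, I)}
    (hF : ∀ x, (F x : ℝ) = tri (wiggle g t N x)) (hc : Continuous g)
    (hf : ∀ U V : Set I, IsOpen U → IsOpen V → U.Nonempty → V.Nonempty →
      ∃ f : I → I, (∀ x, |(f x : ℝ) - h x| ≤ t) ∧ ∃ n : ℕ, 0 < n ∧ (U ∩ f^[n] ⁻¹' V).Nonempty) :
    IsTransitiveMap F := by
  intro U V hU hV hUne hVne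
  have h4 := H.four_le
  have hθ0 : 0 < 2 / N := by apply div_pos <;> linarith
  obtain ⟨a, b, hab, hUab⟩ := hU.exists_Ioo_subset hUne
  obtain ⟨a', ha, ha'⟩ := exists_between hab
  obtain ⟨b', hb, hb'⟩ := exists_between ha'
  obtain ⟨n, c, d, hcd, hsub⟩ := H.exists_long hF hc (isPreconnected_Ioo (a := a) (b := b))
    ⟨ha, ha'⟩ ⟨ha.trans hb, hb'⟩ hb
  have hlt : c < d := Subtype.coe_lt_coe.1 (by linarith)
  obtain ⟨f, hft, k, hk, y, hy, hyV⟩ :=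
    hf (Set.Ioo c d) V isOpen_Ioo hV (Set.nonempty_Ioo.2 hlt) hVne
  have follow : ∀ j : ℕ, ∃ p q : I, f^[j] y ∈ Set.Icc p q ∧ (q : ℝ) - p = 2 / N ∧
      Set.Icc p q ⊆ F^[n + j] '' Set.Ioo a b := by
    intro j
    induction j with
    | zero => exact ⟨c, d, Set.Ioo_subset_Icc_self hy, hcd, hsub⟩
    | succ j ih =>
      obtain ⟨p, q, hmem, hpq, hs⟩ := ih
      obtain ⟨p', q', hmem', hpq', hs'⟩ := H.exists_cover hpq hF hc hft hmem
      refine ⟨p', q', ?_, hpq', hs'.trans ?_⟩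
      · rwa [Function.iterate_succ_apply']
      · rw [← add_assoc, Function.iterate_succ', Set.image_comp]
        exact Set.image_mono hs
  obtain ⟨p, q, hmem, -, hs⟩ := follow k
  obtain ⟨x, hx, hxy⟩ := hs hmem
  refine ⟨n + k, by omega, x, hUab hx, ?_⟩
  rw [Set.mem_preimage, hxy]
  exact hyV

end IsWiggle

/-! ### Lipschitz approximation and folded wiggles as maps -/

lemma exists_lipschitz_near (h : C(I, ℝ)) {ε : ℝ} (hε : 0 < ε) :
    ∃ g : C(I, ℝ), ∃ L : ℝ, 0 ≤ L ∧ (∀ x y : I, |g x - g y| ≤ L * |(x : ℝ) - y|) ∧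
      ∀ x, |g x - h x| < ε := by
  obtain ⟨p, hp⟩ := exists_polynomial_near_continuousMap 0 1 h ε hε
  obtain ⟨K, hK⟩ := LocallyLipschitzOn.exists_lipschitzOnWith_of_compact
    (isCompact_Icc (a := (0 : ℝ)) (b := 1))
    ((Polynomial.contDiff_aeval (𝕜 := ℝ) p 1).locallyLipschitz.locallyLipschitzOn)
  refine ⟨p.toContinuousMapOn _, K, K.2, fun x y => ?_, fun x => ?_⟩
  · have := hK.dist_le_mul x x.2 y y.2
    simpa [Real.dist_eq, Polynomial.coe_aeval_eq_eval] using this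
  · exact (ContinuousMap.norm_coe_le_norm (p.toContinuousMapOn _ - h) x).trans_lt hp

/-- The folded wiggle as a continuous self-map of `I`. -/
noncomputable def foldedWiggle (g : C(I, ℝ)) (t N : ℝ) : C(I, I) where
  toFun x := ⟨tri (wiggle g t N x), tri_mem _⟩
  continuous_toFun := by
    have := continuous_tri
    unfold wiggle
    fun_prop

lemma transSet_nonempty : TransSet.Nonempty := by
  -- a wiggle around `0` of amplitude at least `1`: every map is `1`-close to `0`, so any two
  -- nonempty open sets are joined by a constant map
  have H : IsWiggle (0 : C(I, ℝ)) (fun _ => 0) 1 0 ((4 * 0 + 4) / 1 + 4) :=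
    ⟨one_pos, le_rfl, rfl, by simp, by simp⟩
  refine ⟨foldedWiggle 0 1 _, H.isTransitiveMap (fun _ => rfl) (map_continuous _) ?_⟩
  rintro U V - - ⟨u, hu⟩ ⟨v, hv⟩
  refine ⟨fun _ => v, fun _ => ?_, 1, one_pos, u, hu, hv⟩
  simpa [abs_of_nonneg v.2.1] using v.2.2

/-- Folding is `1`-Lipschitz and fixes `I`, so it does not increase the distance to `h`. -/
lemma IsWiggle.dist_foldedWiggle_le {g : C(I, ℝ)} {h : C(I, I)} {t L N : ℝ}
    (H : IsWiggle g h t L N) (x : I) : dist (foldedWiggle g t N x) (h x) ≤ 4 * t := by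
  have ht := H.t_pos
  have h1 := abs_tri_sub_le (wiggle g t N x) (h x)
  rw [tri_of_mem (h x).2] at h1
  have h2 := abs_le.1 (H.near x)
  have h3 := tri_mem (N * x)
  have h4 : |wiggle g t N x - h x| ≤ 4 * t := by
    unfold wiggle
    rw [abs_le]
    constructor <;> nlinarith [h3.1, h3.2]
  exact h1.trans h4

/-! ### Extension and parametric smoothing -/

/-- Tietze extension for maps into `C(I, I)`, by uncurrying. -/
lemma exists_extension_curry {X Z : Type} [TopologicalSpace X] [MetricSpace Z] {e : X → Z}
    (he : IsClosedEmbedding e) (φ : C(X, C(I, I))) :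
    ∃ E : C(Z, C(I, I)), ∀ x, E (e x) = φ x := by
  let Φ : C(X × I, ℝ) := ⟨fun p => φ p.1 p.2, by fun_prop⟩
  obtain ⟨G, hG, hGe⟩ := Φ.exists_extension_forall_mem_of_isClosedEmbedding
    (t := I) (fun p => (φ p.1 p.2).2) ⟨0, zero_mem⟩ (he.prodMap (IsClosedEmbedding.id (X := I)))
  let G' : C(Z × I, I) := ⟨fun p => ⟨G p, hG p⟩, by fun_prop⟩
  refine ⟨G'.curry, fun x => ContinuousMap.ext fun s => Subtype.ext ?_⟩
  exact congrFun hGe (x, s)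

/-- Parametric smoothing: the admissible pairs `(g, L)` form a convex set and a given pair remains
admissible for nearby parameters, so a partition of unity gives a continuous choice. -/
lemma exists_parametric_lipschitz {X : Type} [MetricSpace X] (E : C(X, C(I, I))) (τ : C(X, ℝ))
    (hτ : ∀ z, 0 < τ z) :
    ∃ G : C(X, C(I, ℝ) × ℝ), ∀ z, 0 ≤ (G z).2 ∧
      (∀ x y : I, |(G z).1 x - (G z).1 y| ≤ (G z).2 * |(x : ℝ) - y|) ∧
      ∀ x, |(G z).1 x - E z x| ≤ τ z := by
  refine exists_continuous_forall_mem_convex_of_local_const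
    (t := fun z => {p : C(I, ℝ) × ℝ | 0 ≤ p.2 ∧
      (∀ x y : I, |p.1 x - p.1 y| ≤ p.2 * |(x : ℝ) - y|) ∧ ∀ x, |p.1 x - E z x| ≤ τ z})
    (fun z => ?_) (fun z => ?_)
  · rintro ⟨g, L⟩ ⟨h1, h2, h3⟩ ⟨g', L'⟩ ⟨h1', h2', h3'⟩ a b ha hb hab
    refine ⟨?_, fun x y => ?_, fun x => ?_⟩
    · simp only [Prod.smul_mk, Prod.mk_add_mk, smul_eq_mul] at *
      positivity
    · have e1 := mul_le_mul_of_nonneg_left (h2 x y) ha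
      have e2 := mul_le_mul_of_nonneg_left (h2' x y) hb
      have e3 := abs_add_le (a * (g x - g y)) (b * (g' x - g' y))
      rw [abs_mul, abs_mul, abs_of_nonneg ha, abs_of_nonneg hb] at e3
      simp only [Prod.smul_mk, Prod.mk_add_mk, smul_eq_mul, ContinuousMap.add_apply,
        ContinuousMap.smul_apply] at *
      calc _ = |a * (g x - g y) + b * (g' x - g' y)| := by congr 1; ring
        _ ≤ _ := by linarith
    · have e1 := mul_le_mul_of_nonneg_left (h3 x) ha
      have e2 := mul_le_mul_of_nonneg_left (h3' x) hb
      have e3 := abs_add_le (a * (g x - E z x)) (b * (g' x - E z x))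
      rw [abs_mul, abs_mul, abs_of_nonneg ha, abs_of_nonneg hb] at e3
      simp only [Prod.smul_mk, Prod.mk_add_mk, smul_eq_mul, ContinuousMap.add_apply,
        ContinuousMap.smul_apply] at *
      calc _ = |a * (g x - E z x) + b * (g' x - E z x)| := by
            congr 1; linear_combination (E z x : ℝ) * hab
        _ ≤ a * τ z + b * τ z := by linarith
        _ = τ z := by rw [← add_mul, hab, one_mul]
  · obtain ⟨g, L, hL, hlip, hg⟩ :=
      exists_lipschitz_near (⟨fun x => E z x, by fun_prop⟩ : C(I, ℝ)) (half_pos (half_pos (hτ z)))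
    refine ⟨(g, L), ?_⟩
    have hE := Metric.tendsto_nhds.1 (E.continuous.tendsto z) _ (half_pos (half_pos (hτ z)))
    have hT := (τ.continuous.tendsto z).eventually (lt_mem_nhds (half_lt_self (hτ z)))
    filter_upwards [hE, hT] with w hw hw'
    refine ⟨hL, hlip, fun x => ?_⟩
    have h1 := hg x
    have h2 : |(E w x : ℝ) - E z x| < τ z / 2 / 2 :=
      (ContinuousMap.dist_apply_le_dist (f := E w) (g := E z) x).trans_lt hw
    simp only [ContinuousMap.coe_mk] at h1
    rw [abs_lt] at h1 h2
    rw [abs_le]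
    constructor <;> linarith

/-! ### The retraction -/

theorem transSet_is_absolute_retract :
    ∀ (Z : Type) [MetricSpace Z] (e : ↥TransSet → Z), IsClosedEmbedding e →
      ∃ r : Z → ↥TransSet, Continuous r ∧ ∀ x : ↥TransSet, r (e x) = x := by
  intro Z _ e he
  classical
  obtain ⟨E, hE⟩ := exists_extension_curry he ⟨Subtype.val, continuous_subtype_val⟩
  simp only [ContinuousMap.coe_mk] at hE
  have hne : (Set.range e).Nonempty := by
    obtain ⟨f, hf⟩ := transSet_nonempty
    exact ⟨_, ⟨f, hf⟩, rfl⟩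
  let τ : C(Z, ℝ) := ⟨fun z => Metric.infDist (E z) TransSet + Metric.infDist z (Set.range e),
    ((Metric.continuous_infDist_pt _).comp E.continuous).add (Metric.continuous_infDist_pt _)⟩
  have hτ0 : ∀ x, τ (e x) = 0 := by
    intro x
    have h1 : Metric.infDist (E (e x)) TransSet = 0 :=
      Metric.infDist_zero_of_mem (by rw [hE]; exact x.2)
    have h2 : Metric.infDist (e x) (Set.range e) = 0 := Metric.infDist_zero_of_mem ⟨x, rfl⟩
    simp [τ, h1, h2]
  have hdist : ∀ z, z ∉ Set.range e → 0 < Metric.infDist z (Set.range e) := fun z hz =>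
    (he.isClosed_range.notMem_iff_infDist_pos hne).1 hz
  have hτ : ∀ z, z ∉ Set.range e → 0 < τ z := fun z hz =>
    add_pos_of_nonneg_of_pos Metric.infDist_nonneg (hdist z hz)
  obtain ⟨G, hG⟩ := exists_parametric_lipschitz (X := {z : Z // z ∉ Set.range e})
    (E.comp ⟨Subtype.val, continuous_subtype_val⟩) (τ.comp ⟨Subtype.val, continuous_subtype_val⟩)
    (fun z => hτ z z.2)
  simp only [ContinuousMap.comp_apply, ContinuousMap.coe_mk] at hG
  let ν : {z : Z // z ∉ Set.range e} → ℝ := fun z => (4 * (G z).2 + 4) / τ z + 4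
  have hW : ∀ z : {z : Z // z ∉ Set.range e}, IsWiggle (G z).1 (E z) (τ z) (G z).2 (ν z) := fun z =>
    ⟨hτ z z.2, (hG z).1, rfl, (hG z).2.1, (hG z).2.2⟩
  let R : Z → C(I, I) := fun z =>
    if hz : z ∈ Set.range e then E z else foldedWiggle (G ⟨z, hz⟩).1 (τ z) (ν ⟨z, hz⟩)
  have hRe : ∀ x, R (e x) = x := fun x => by
    simp only [R, dif_pos (Set.mem_range_self x), hE]
  have hRX : ∀ z : {z : Z // z ∉ Set.range e}, R z = foldedWiggle (G z).1 (τ z) (ν z) :=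
    fun z => dif_neg z.2
  have hRT : ∀ z, R z ∈ TransSet := by
    intro z
    by_cases hz : z ∈ Set.range e
    · obtain ⟨x, rfl⟩ := hz
      rw [hRe]
      exact x.2
    · rw [hRX ⟨z, hz⟩]
      refine (hW ⟨z, hz⟩).isTransitiveMap (fun _ => rfl) (map_continuous _) ?_
      intro U V hU hV hUne hVne
      obtain ⟨f, hf, hfz⟩ := (Metric.infDist_lt_iff transSet_nonempty).1
        (lt_add_of_pos_right (Metric.infDist (E z) TransSet) (hdist z hz))
      refine ⟨f, fun x => ?_, hf U V hU hV hUne hVne⟩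
      have := (ContinuousMap.dist_apply_le_dist (f := E z) (g := f) x).trans hfz.le
      rw [dist_comm] at this
      exact this
  have hclose : ∀ z, dist (R z) (E z) ≤ 4 * τ z := by
    intro z
    by_cases hz : z ∈ Set.range e
    · obtain ⟨x, rfl⟩ := hz
      rw [hRe, hE, hτ0]; simp
    · rw [hRX ⟨z, hz⟩, ContinuousMap.dist_le (by linarith [hτ z hz])]
      exact (hW ⟨z, hz⟩).dist_foldedWiggle_le
  have hRcont : Continuous R := by
    rw [continuous_iff_continuousAt]
    intro z
    by_cases hz : z ∈ Set.range e
    · obtain ⟨x, rfl⟩ := hz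
      -- both `E` and the bound `4 τ` on the distance from `R` to `E` are continuous
      have h0 : Filter.Tendsto (fun z => 4 * τ z) (𝓝 (e x)) (𝓝 0) := by
        have := (τ.continuous.tendsto (e x)).const_mul 4
        rwa [hτ0, mul_zero] at this
      have h1 : Filter.Tendsto (fun z => dist (E z) (R z)) (𝓝 (e x)) (𝓝 0) :=
        squeeze_zero (fun _ => dist_nonneg) (fun z => by rw [dist_comm]; exact hclose z) h0
      have h2 := (E.continuous.tendsto (e x)).congr_dist h1
      rw [ContinuousAt, hRe]
      rwa [hE] at h2
    · have hopen : IsOpen (Set.range e)ᶜ := he.isClosed_range.isOpen_compl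
      have hcX : Continuous fun z : {z : Z // z ∉ Set.range e} => R z := by
        simp only [hRX]
        apply ContinuousMap.continuous_of_continuous_uncurry
        have hν : Continuous ν := by
          refine Continuous.add (Continuous.div (by fun_prop) (by fun_prop) ?_) continuous_const
          exact fun z => (hτ z z.2).ne'
        have := continuous_tri
        have hg : Continuous fun p : {z : Z // z ∉ Set.range e} × I => (G p.1).1 p.2 := by fun_prop
        refine Continuous.subtype_mk (this.comp ?_) _
        unfold wiggle
        fun_prop
      exact (hopen.isOpenEmbedding_subtypeVal.continuousAt_iff (x := ⟨z, hz⟩)).1 hcX.continuousAt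
  exact ⟨fun z => ⟨R z, hRT z⟩, hRcont.subtype_mk _, fun x => Subtype.ext (hRe x)⟩
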